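/- arXiv:2602.09358 — 2 statements merged into one kernel-verified Lean document; each statement's English description precedes it below -/
import Mathlib

section
/- Let E_1 < E_2 < ... < E_d be distinct real numbers and let p be a probability distribution on {E_1,...,E_d} with mean ε = Σ_i p(E_i) E_i. Then there exist K ≤ d−1, nonnegative weights p_1,...,p_K summing to 1, and probability distributions q_1,...,q_K on {E_1,...,E_d} such that: (i) each q_k is supported on at most two points, (ii) each q_k has mean Σ_i q_k(E_i) E_i = ε, and (iii) p = Σ_k p_k q_k. Consequently, Σ_k p_k Var(q_k) = Var(p), where Var(q) = Σ_i q(E_i) E_i² − (Σ_i q(E_i) E_i)². -/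
/-!
Recentre the energies as `x = E - ε`, so that `p` has first moment zero. The support of `p` then
contains a point where `x ≤ 0` and one where `x ≥ 0`, and on these (at most two) points there is
a nonzero nonnegative weight with first moment zero. Subtract from `p` the largest multiple of it
which stays below `p`: the remainder is again nonnegative with first moment zero, and its support
has lost a point. Iterating until two points are left takes at most `d - 2` subtractions, hence
at most `d - 1` pieces, and normalising these gives the decomposition. All pieces have the same
mean, so averaging their variances is averaging their second moments, which is linear.
-/

open Function

section Support

variable {ι M : Type*}

lemma support_single_add_single_subset [DecidableEq ι] [AddZeroClass M] (i j : ι) (a b : M) :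
    support (Pi.single i a + Pi.single j b : ι → M) ⊆ {i, j} :=
  (support_add _ _).trans (Set.union_subset_union Pi.support_single_subset Pi.support_single_subset)

lemma support_sub_ssubset [AddGroup M] [PartialOrder M] {p r : ι → M} (hr : 0 ≤ r) (hrp : r ≤ p)
    {i : ι} (hi : i ∈ support p) (hri : r i = p i) : support (p - r) ⊂ support p := by
  refine (Set.ssubset_iff_of_subset (support_subset_iff'.2 fun j hj ↦ ?_)).2
    ⟨i, hi, by simp [hri]⟩
  have hpj : p j = 0 := notMem_support.1 hj
  have hrj : r j = 0 := le_antisymm (hpj ▸ hrp j) (hr j)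
  simp [hpj, hrj]

end Support

lemma dotProduct_sub_const {ι R : Type*} [Fintype ι] [NonUnitalNonAssocRing R] (p E : ι → R)
    (ε : R) :
    p ⬝ᵥ (fun i ↦ E i - ε) = p ⬝ᵥ E - (∑ i, p i) * ε := by
  simp only [dotProduct, mul_sub, Finset.sum_sub_distrib, Finset.sum_mul]

lemma sum_smul_dotProduct {ι κ R : Type*} [Fintype ι] [Fintype κ] [Semiring R]
    (w : κ → R) (q : κ → ι → R) (f : ι → R) :
    (∑ k, w k • q k) ⬝ᵥ f = ∑ k, w k * (q k ⬝ᵥ f) := by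
  simp only [sum_dotProduct, smul_dotProduct, smul_eq_mul]

/-- A nonnegative weight `p`, not necessarily of total mass one, whose first moment with respect
to the positions `x` vanishes: an unnormalised distribution of mean zero. -/
structure IsCenteredWeight {ι R : Type*} [Fintype ι] [Semiring R] [PartialOrder R]
    (x p : ι → R) : Prop where
  nonneg : 0 ≤ p
  dotProduct_eq_zero : p ⬝ᵥ x = 0

/-- A nonzero centered weight carried by at most two indices: an unnormalised version of the pieces
of the decomposition. Being nonzero, it can be normalised. -/
structure IsTwoPointCenteredWeight {ι R : Type*} [Fintype ι] [Semiring R] [PartialOrder R]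
    (x p : ι → R) : Prop extends IsCenteredWeight x p where
  ne_zero : p ≠ 0
  ncard_support_le_two : (support p).ncard ≤ 2

section Ring

variable {ι R : Type*} [Fintype ι] [Ring R] {x p r : ι → R}

lemma IsCenteredWeight.neg_left [PartialOrder R] (h : IsCenteredWeight x p) :
    IsCenteredWeight (-x) p :=
  ⟨h.nonneg, by rw [dotProduct_neg, h.dotProduct_eq_zero, neg_zero]⟩

variable [LinearOrder R] [IsStrictOrderedRing R]

lemma IsCenteredWeight.sub (hp : IsCenteredWeight x p) (hr : IsCenteredWeight x r) (hrp : r ≤ p) :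
    IsCenteredWeight x (p - r) :=
  ⟨sub_nonneg.2 hrp, by rw [sub_dotProduct, hp.dotProduct_eq_zero, hr.dotProduct_eq_zero, sub_zero]⟩

lemma IsTwoPointCenteredWeight.const_smul (h : IsTwoPointCenteredWeight x p) {c : R} (hc : 0 < c) :
    IsTwoPointCenteredWeight x (c • p) where
  nonneg := smul_nonneg hc.le h.nonneg
  dotProduct_eq_zero := by rw [smul_dotProduct, h.dotProduct_eq_zero, smul_zero]
  ne_zero := smul_ne_zero hc.ne' h.ne_zero
  ncard_support_le_two := by
    rw [support_const_smul_of_ne_zero c p hc.ne']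
    exact h.ncard_support_le_two

lemma IsCenteredWeight.exists_mem_support_nonpos (h : IsCenteredWeight x p) (hp : p ≠ 0) :
    ∃ i ∈ support p, x i ≤ 0 := by
  by_contra! hpos
  obtain ⟨i, hi⟩ := support_nonempty_iff.2 hp
  have hterm_pos {j : ι} (hj : j ∈ support p) : 0 < p j * x j :=
    mul_pos ((h.nonneg j).lt_of_ne' hj) (hpos j hj)
  have hterm_nonneg (j : ι) : 0 ≤ p j * x j := by
    by_cases hj : p j = 0
    · simp [hj]
    · exact (hterm_pos hj).le
  have hsum : 0 < p ⬝ᵥ x :=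
    Finset.sum_pos' (fun j _ ↦ hterm_nonneg j) ⟨i, Finset.mem_univ i, hterm_pos hi⟩
  exact hsum.ne' h.dotProduct_eq_zero

lemma IsCenteredWeight.exists_mem_support_nonneg (h : IsCenteredWeight x p) (hp : p ≠ 0) :
    ∃ i ∈ support p, 0 ≤ x i := by
  simpa using h.neg_left.exists_mem_support_nonpos hp

lemma isTwoPointCenteredWeight_single_one [DecidableEq ι] {i : ι} (hi : x i = 0) :
    IsTwoPointCenteredWeight x (Pi.single i 1) where
  nonneg := Pi.single_nonneg.2 zero_le_one
  dotProduct_eq_zero := by rw [single_dotProduct, hi, mul_zero]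
  ne_zero := by simp
  ncard_support_le_two := by simp [Pi.support_single_of_ne]

end Ring

section CommRing

variable {ι R : Type*} [Fintype ι] [CommRing R] [LinearOrder R] [IsStrictOrderedRing R]
  {x p : ι → R}

-- The masses at `i` and `j` are those of the lever rule, up to normalisation.
lemma isTwoPointCenteredWeight_single_add_single [DecidableEq ι] {i j : ι} (hi : x i < 0)
    (hj : 0 ≤ x j) :
    IsTwoPointCenteredWeight x (Pi.single i (x j) + Pi.single j (-x i)) where
  nonneg := add_nonneg (Pi.single_nonneg.2 hj) (Pi.single_nonneg.2 (neg_nonneg.2 hi.le))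
  dotProduct_eq_zero := by
    rw [add_dotProduct, single_dotProduct, single_dotProduct]
    ring
  ne_zero := by
    have hji : j ≠ i := by
      rintro rfl
      exact hi.not_ge hj
    exact ne_iff.2 ⟨j, by simp [hji, hi.ne]⟩
  ncard_support_le_two :=
    (Set.ncard_le_ncard (support_single_add_single_subset ..) (Set.toFinite _)).trans
      ((Set.ncard_insert_le i {j}).trans_eq (by rw [Set.ncard_singleton]))

lemma IsCenteredWeight.exists_isTwoPointCenteredWeight_support_subset
    (h : IsCenteredWeight x p) (hp : p ≠ 0) :
    ∃ r, IsTwoPointCenteredWeight x r ∧ support r ⊆ support p := by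
  classical
  obtain ⟨i, hip, hi⟩ := h.exists_mem_support_nonpos hp
  obtain ⟨j, hjp, hj⟩ := h.exists_mem_support_nonneg hp
  rcases hi.eq_or_lt with hi | hi
  · exact ⟨_, isTwoPointCenteredWeight_single_one hi,
      Pi.support_single_subset.trans (Set.singleton_subset_iff.2 hip)⟩
  · exact ⟨_, isTwoPointCenteredWeight_single_add_single hi hj,
      (support_single_add_single_subset ..).trans (Set.pair_subset hip hjp)⟩

end CommRing

section Field

variable {ι 𝕜 : Type*} [Field 𝕜] [LinearOrder 𝕜] [IsStrictOrderedRing 𝕜] {p r : ι → 𝕜}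

lemma exists_pos_smul_le_and_exists_eq [Finite ι] (hp : 0 ≤ p) (hr : 0 ≤ r) (hr0 : r ≠ 0)
    (hrp : support r ⊆ support p) :
    ∃ c : 𝕜, 0 < c ∧ c • r ≤ p ∧ ∃ i ∈ support p, c * r i = p i := by
  have hpos {i : ι} (hi : i ∈ support r) : 0 < r i := (hr i).lt_of_ne' hi
  obtain ⟨i, hi, hmin⟩ := Set.exists_min_image (support r) (fun i ↦ p i / r i)
    (Set.toFinite _) (support_nonempty_iff.2 hr0)
  refine ⟨p i / r i, div_pos ((hp i).lt_of_ne' (hrp hi)) (hpos hi), fun j ↦ ?_,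
    i, hrp hi, div_mul_cancel₀ _ hi⟩
  by_cases hj : r j = 0
  · simpa [hj] using hp j
  · exact (le_div_iff₀ (hpos hj)).1 (hmin j hj)

variable [Fintype ι] {x : ι → 𝕜}

lemma IsCenteredWeight.exists_isTwoPointCenteredWeight_le (h : IsCenteredWeight x p)
    (hp : p ≠ 0) :
    ∃ r, IsTwoPointCenteredWeight x r ∧ r ≤ p ∧ support (p - r) ⊂ support p := by
  obtain ⟨r, hr, hrp⟩ := h.exists_isTwoPointCenteredWeight_support_subset hp
  obtain ⟨c, hc, hle, i, hi, heq⟩ :=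
    exists_pos_smul_le_and_exists_eq h.nonneg hr.nonneg hr.ne_zero hrp
  have hcr := hr.const_smul hc
  exact ⟨c • r, hcr, hle, support_sub_ssubset hcr.nonneg hle hi heq⟩

theorem IsCenteredWeight.exists_sum_isTwoPointCenteredWeight (h : IsCenteredWeight x p)
    (hp : p ≠ 0) :
    ∃ K ≤ max 1 ((support p).ncard - 1), ∃ r : Fin K → ι → 𝕜,
      (∀ k, IsTwoPointCenteredWeight x (r k)) ∧ ∑ k, r k = p := by
  induction hn : (support p).ncard using Nat.strong_induction_on generalizing p with
  | h n ih =>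
  by_cases hn2 : n ≤ 2
  · exact ⟨1, le_max_left .., fun _ ↦ p, fun _ ↦ ⟨h, hp, hn ▸ hn2⟩, by simp⟩
  obtain ⟨r, hr, hrp, hsupp⟩ := h.exists_isTwoPointCenteredWeight_le hp
  have hlt : (support (p - r)).ncard < n := hn ▸ Set.ncard_lt_ncard hsupp (Set.toFinite _)
  have hne : p - r ≠ 0 := by
    intro hpr
    have hpr_eq : p = r := sub_eq_zero.1 hpr
    exact hn2 (hn ▸ hpr_eq ▸ hr.ncard_support_le_two)
  obtain ⟨K, hK, s, hs, hsum⟩ := ih _ hlt (h.sub hr.toIsCenteredWeight hrp) hne rfl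
  refine ⟨K + 1, by lia, Fin.cons r s, Fin.forall_fin_succ.2 ⟨hr, hs⟩, ?_⟩
  simp [Fin.sum_univ_succ, hsum]

lemma IsTwoPointCenteredWeight.exists_smul_mem_stdSimplex {E : ι → 𝕜} {ε : 𝕜}
    (h : IsTwoPointCenteredWeight (fun i ↦ E i - ε) r) :
    ∃ w : 𝕜, 0 ≤ w ∧ ∃ q ∈ stdSimplex 𝕜 ι,
      (support q).ncard ≤ 2 ∧ q ⬝ᵥ E = ε ∧ w • q = r := by
  have hmass : 0 < ∑ i, r i := Fintype.sum_pos (h.nonneg.lt_of_ne' h.ne_zero)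
  have hmoment : r ⬝ᵥ E = (∑ i, r i) * ε := by
    rw [← sub_eq_zero, ← dotProduct_sub_const, h.dotProduct_eq_zero]
  have hq := h.const_smul (inv_pos.2 hmass)
  refine ⟨∑ i, r i, hmass.le, (∑ i, r i)⁻¹ • r, ⟨hq.nonneg, ?_⟩, hq.ncard_support_le_two, ?_,
    smul_inv_smul₀ hmass.ne' r⟩
  · simp only [Pi.smul_apply, smul_eq_mul, ← Finset.mul_sum, inv_mul_cancel₀ hmass.ne']
  · rw [smul_dotProduct, hmoment, smul_eq_mul, inv_mul_cancel_left₀ hmass.ne']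

end Field

lemma sum_mul_variance_of_forall_mean_eq {ι κ R : Type*} [Fintype ι] [Fintype κ] [Ring R]
    {w : κ → R} {q : κ → ι → R} {E : ι → R} {ε : R} (hw : ∑ k, w k = 1)
    (hq : ∀ k, q k ⬝ᵥ E = ε) :
    ∑ k, w k * (q k ⬝ᵥ E ^ 2 - (q k ⬝ᵥ E) ^ 2) =
      (∑ k, w k • q k) ⬝ᵥ E ^ 2 - ((∑ k, w k • q k) ⬝ᵥ E) ^ 2 := by
  simp only [sum_smul_dotProduct, hq, mul_sub, Finset.sum_sub_distrib, ← Finset.sum_mul, hw,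
    one_mul]

theorem compress_distribution_two_point_decomposition_general {ι 𝕜 : Type*} [Fintype ι]
    [Field 𝕜] [LinearOrder 𝕜] [IsStrictOrderedRing 𝕜] (E p : ι → 𝕜) (hp : ∀ i, 0 ≤ p i)
    (hpsum : ∑ i, p i = 1) :
    ∃ K : ℕ, K ≤ max 1 ((support p).ncard - 1) ∧
      ∃ (w : Fin K → 𝕜) (q : Fin K → ι → 𝕜),
        (∀ k, 0 ≤ w k) ∧ (∑ k, w k = 1) ∧
        (∀ k i, 0 ≤ q k i) ∧ (∀ k, ∑ i, q k i = 1) ∧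
        (∀ k, (support (q k)).ncard ≤ 2) ∧
        (∀ k, ∑ i, q k i * E i = ∑ i, p i * E i) ∧
        (∀ i, p i = ∑ k, w k * q k i) ∧
        (∑ k, w k * ((∑ i, q k i * E i ^ 2) - (∑ i, q k i * E i) ^ 2)
          = (∑ i, p i * E i ^ 2) - (∑ i, p i * E i) ^ 2) := by
  have hcentered : IsCenteredWeight (fun i ↦ E i - p ⬝ᵥ E) p :=
    ⟨hp, by rw [dotProduct_sub_const, hpsum, one_mul, sub_self]⟩
  have hp0 : p ≠ 0 := by
    rintro rfl
    simp at hpsum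
  obtain ⟨K, hK, r, hr, hrp⟩ := hcentered.exists_sum_isTwoPointCenteredWeight hp0
  choose w hw q hq hsupp hmean hwq using fun k ↦ (hr k).exists_smul_mem_stdSimplex
  have hmix : ∑ k, w k • q k = p := by simp only [hwq, hrp]
  have hwsum : ∑ k, w k = 1 := by
    simpa only [hmix, dotProduct_one, hpsum, (hq _).2, mul_one] using
      (sum_smul_dotProduct w q 1).symm
  have hvar := sum_mul_variance_of_forall_mean_eq hwsum hmean
  rw [hmix] at hvar
  exact ⟨K, hK, w, q, hw, hwsum, fun k ↦ (hq k).1, fun k ↦ (hq k).2, hsupp, hmean,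
    fun i ↦ by simp [← hmix], hvar⟩

/-- Let `E 0 < E 1 < ... < E (d-1)` be distinct real numbers and `p` a
probability distribution on them with mean `ε = ∑ i, p i * E i`.  Then there exist
`K ≤ d - 1`, nonnegative weights `w k` summing to `1`, and probability distributions
`q k` on the same points such that each `q k` is supported on at most two points,
each `q k` has mean `ε`, and `p = ∑ k, w k * q k`.  Consequently the weighted average
of the variances of the `q k` equals the variance of `p`. -/
theorem compress_distribution_two_point_decomposition
    (d : ℕ) (hd : 2 ≤ d) (E : Fin d → ℝ) (hE : StrictMono E)
    (p : Fin d → ℝ) (hp : ∀ i, 0 ≤ p i) (hpsum : ∑ i, p i = 1) :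
    ∃ (K : ℕ), K ≤ d - 1 ∧
      ∃ (w : Fin K → ℝ) (q : Fin K → Fin d → ℝ),
        (∀ k, 0 ≤ w k) ∧ (∑ k, w k = 1) ∧
        (∀ k i, 0 ≤ q k i) ∧ (∀ k, ∑ i, q k i = 1) ∧
        (∀ k, ({i | q k i ≠ 0} : Set (Fin d)).ncard ≤ 2) ∧
        (∀ k, ∑ i, q k i * E i = ∑ i, p i * E i) ∧
        (∀ i, p i = ∑ k, w k * q k i) ∧
        (∑ k, w k * ((∑ i, q k i * E i ^ 2) - (∑ i, q k i * E i) ^ 2)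
          = (∑ i, p i * E i ^ 2) - (∑ i, p i * E i) ^ 2) := by
  obtain ⟨K, hK, h⟩ := compress_distribution_two_point_decomposition_general E p hp hpsum
  have hcard : (support p).ncard ≤ d := by simpa using Set.ncard_le_card (support p)
  exact ⟨K, by lia, h⟩
end

section
/- For φ ∈ ℝ let e_φ := (1/√2)(|0⟩ + e^{iφ}|1⟩) ∈ ℂ², and for m ∈ {0,1} define the linear map A_m : ℂ² ⊗ ℂ² → ℂ² by A_m := (id ⊗ ⟨m|) ∘ CNOT, where CNOT|a⟩⊗|b⟩ = |a⟩⊗|a ⊕ b⟩. Then for all N ≥ 1, all phases θ₁,...,θ_N ∈ ℝ, and all outcome strings m₂,...,m_N ∈ {0,1}, the vector v obtained by iteratively applying v ← A_{m_j}(v ⊗ e_{θ_j}) for j = 2,...,N starting from v = e_{θ₁} satisfies v = c · 2^{−(N−1)/2} · e_{θ_tot}, where θ_tot = θ₁ + Σ_{j=2}^{N} (−1)^{m_j} θ_j and c ∈ ℂ is a unimodular scalar (|c| = 1). In particular ‖v‖² = 2^{−(N−1)}, so every outcome string occurs with probability 2^{−(N−1)}. -/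
open scoped TensorProduct

/-- The standard basis vector `|a⟩` of `ℂ²`. -/
noncomputable def ket (a : Fin 2) : Fin 2 → ℂ := Pi.single a 1

/-- The equatorial qubit state `e_φ = (|0⟩ + e^{iφ}|1⟩)/√2`. -/
noncomputable def eqState (φ : ℝ) : Fin 2 → ℂ :=
  ((Real.sqrt 2 : ℝ) : ℂ)⁻¹ • (ket 0 + Complex.exp (Complex.I * φ) • ket 1)

/-!
Reading `m` on the target of a CNOT whose control is `|a⟩` forces the target input to be `|a ⊕ m⟩`,
so `A m (v ⊗ w)` has amplitudes `v a * w (a ⊕ m)`; for a general sum gate `a ⊕ m` becomes `-a + m`.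
As an integer `a ⊕ m = m + (-1)^m a`, so the phases `a φ` and `(a ⊕ m) θ` add up to
`a (φ + (-1)^m θ)` plus the global phase `m θ`. The global phases accumulate to
`c = exp (i ∑ m j θ j)`.
-/

/-- `U` is the sum gate `|a⟩ ⊗ |b⟩ ↦ |a⟩ ⊗ |a + b⟩` on two qudits with basis labelled by `G`; for
`G = Fin 2` it is CNOT. Stated on basis vectors only, which determine `U` when `G` is finite. -/
def IsSumGate {R G : Type*} [CommSemiring R] [Add G] [DecidableEq G]
    (U : (G → R) ⊗[R] (G → R) →ₗ[R] (G → R) ⊗[R] (G → R)) : Prop :=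
  ∀ a b : G, U (Pi.single a 1 ⊗ₜ[R] Pi.single b 1) = Pi.single a 1 ⊗ₜ[R] Pi.single (a + b) 1

theorem IsSumGate.rid_map_id_proj_tmul_apply {R G : Type*} [CommSemiring R] [AddGroup G]
    [Finite G] [DecidableEq G] {U : (G → R) ⊗[R] (G → R) →ₗ[R] (G → R) ⊗[R] (G → R)}
    (hU : IsSumGate U) (m : G) (v w : G → R) (a : G) :
    TensorProduct.rid R (G → R)
      (TensorProduct.map LinearMap.id (LinearMap.proj m) (U (v ⊗ₜ[R] w))) a =
      v a * w (-a + m) := by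
  let contract : (G → R) ⊗[R] (G → R) →ₗ[R] (G → R) :=
    (TensorProduct.rid R (G → R)).toLinearMap ∘ₗ
      TensorProduct.map LinearMap.id (LinearMap.proj m)
  suffices amplitude : LinearMap.proj a ∘ₗ contract ∘ₗ U =
      LinearMap.mul' R R ∘ₗ TensorProduct.map (LinearMap.proj a) (LinearMap.proj (-a + m)) from
    LinearMap.congr_fun amplitude (v ⊗ₜ[R] w)
  let basis := Pi.basisFun R G
  refine (basis.tensorProduct basis).ext fun ⟨i, j⟩ => ?_
  by_cases hi : a = i
  · subst hi
    simp [basis, contract, hU a j, Pi.single_apply, neg_add_eq_iff_eq_add]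
  · simp [basis, contract, hU i j, hi]

theorem eqState_apply (φ : ℝ) (a : Fin 2) :
    eqState φ a = (√2 : ℂ)⁻¹ * Complex.exp (Complex.I * ((a : ℕ) * φ : ℝ)) := by
  fin_cases a <;> simp [eqState, ket]

theorem sum_normSq_smul_eqState (c : ℂ) (φ : ℝ) :
    ∑ a, Complex.normSq ((c • eqState φ) a) = Complex.normSq c := by
  have normSq_amplitude (a : Fin 2) : Complex.normSq (eqState φ a) = 2⁻¹ := by
    simp [eqState_apply, Complex.normSq_eq_norm_sq, Complex.norm_exp]
  simp only [Pi.smul_apply, smul_eq_mul, Complex.normSq_mul, normSq_amplitude, Fin.sum_univ_two]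
  ring

theorem finTwo_val_neg_add_cast (a m : Fin 2) :
    (((-a + m : Fin 2) : ℕ) : ℝ) = (m : ℕ) + (-1) ^ (m : ℕ) * (a : ℕ) := by
  fin_cases a <;> fin_cases m <;> simp

theorem eqState_mul_eqState_neg_add (φ θ : ℝ) (m a : Fin 2) :
    eqState φ a * eqState θ (-a + m) =
      (√2 : ℂ)⁻¹ * Complex.exp (Complex.I * ((m : ℕ) * θ : ℝ)) *
        eqState (φ + (-1) ^ (m : ℕ) * θ) a := by
  have phase_add : (a : ℕ) * φ + ((-a + m : Fin 2) : ℕ) * θ =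
      (m : ℕ) * θ + (a : ℕ) * (φ + (-1) ^ (m : ℕ) * θ) := by
    rw [finTwo_val_neg_add_cast]
    ring
  calc eqState φ a * eqState θ (-a + m)
    _ = (√2 : ℂ)⁻¹ * (√2 : ℂ)⁻¹ * Complex.exp (Complex.I *
          ((a : ℕ) * φ + ((-a + m : Fin 2) : ℕ) * θ : ℝ)) := by
      rw [eqState_apply, eqState_apply, Complex.ofReal_add, mul_add, Complex.exp_add]
      ring
    _ = (√2 : ℂ)⁻¹ * Complex.exp (Complex.I * ((m : ℕ) * θ : ℝ)) *
          eqState (φ + (-1) ^ (m : ℕ) * θ) a := by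
      rw [phase_add, eqState_apply, Complex.ofReal_add, mul_add, Complex.exp_add]
      ring

theorem eqState_cascade {θ : ℕ → ℝ} {m : ℕ → Fin 2} {v : ℕ → Fin 2 → ℂ}
    (hv_zero : v 0 = eqState (θ 0))
    (hv_succ : ∀ j a, v (j + 1) a = v j a * eqState (θ (j + 1)) (-a + m (j + 1))) (n : ℕ) :
    v n = (Complex.exp (Complex.I * (∑ j ∈ Finset.Ico 1 (n + 1), (m j : ℕ) * θ j : ℝ)) *
        (√2 : ℂ)⁻¹ ^ n) •
      eqState (θ 0 + ∑ j ∈ Finset.Ico 1 (n + 1), (-1) ^ (m j : ℕ) * θ j) := by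
  induction n with
  | zero => simp [hv_zero]
  | succ n ih =>
    ext a
    have sum_succ (f : ℕ → ℝ) : ∑ j ∈ Finset.Ico 1 (n + 1 + 1), f j =
        ∑ j ∈ Finset.Ico 1 (n + 1), f j + f (n + 1) :=
      Finset.sum_Ico_succ_top (Nat.le_add_left 1 n) f
    rw [hv_succ, ih, sum_succ, sum_succ, ← add_assoc, Complex.ofReal_add, mul_add,
      Complex.exp_add]
    simp only [Pi.smul_apply, smul_eq_mul]
    rw [mul_assoc, eqState_mul_eqState_neg_add]
    ring

/-- CNOT-cascade compression.  Let `CNOT` act on the computational basis by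
`CNOT(|a⟩⊗|b⟩) = |a⟩⊗|a ⊕ b⟩` and for `m : Fin 2` let
`A m = (id ⊗ ⟨m|) ∘ CNOT : ℂ² ⊗ ℂ² → ℂ²` (partial contraction with `⟨m|`).  Starting from
`v 0 = e_{θ 0}` and iterating `v (j+1) = A (m (j+1)) (v j ⊗ e_{θ (j+1)})`, for every
`N ≥ 1` the vector `v (N-1)` equals `c · 2^{-(N-1)/2} · e_{θ_tot}` for a unimodular
scalar `c`, where `θ_tot = θ 0 + ∑_{j=1}^{N-1} (-1)^{m j} θ j`; in particular
`‖v (N-1)‖² = 2^{-(N-1)}`, so every outcome string occurs with probability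
`2^{-(N-1)}`. -/
theorem cnot_cascade_compression
    (CNOT : (Fin 2 → ℂ) ⊗[ℂ] (Fin 2 → ℂ) →ₗ[ℂ] (Fin 2 → ℂ) ⊗[ℂ] (Fin 2 → ℂ))
    (hCNOT : ∀ a b : Fin 2,
      CNOT (ket a ⊗ₜ[ℂ] ket b) = ket a ⊗ₜ[ℂ] ket (a + b))
    (A : Fin 2 → ((Fin 2 → ℂ) ⊗[ℂ] (Fin 2 → ℂ) →ₗ[ℂ] (Fin 2 → ℂ)))
    (hA : ∀ m : Fin 2,
      A m = (TensorProduct.rid ℂ (Fin 2 → ℂ)).toLinearMap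
              ∘ₗ TensorProduct.map (LinearMap.id : (Fin 2 → ℂ) →ₗ[ℂ] (Fin 2 → ℂ))
                    (LinearMap.proj m : (Fin 2 → ℂ) →ₗ[ℂ] ℂ)
              ∘ₗ CNOT)
    (N : ℕ) (hN : 1 ≤ N) (θ : ℕ → ℝ) (m : ℕ → Fin 2)
    (v : ℕ → (Fin 2 → ℂ))
    (hv0 : v 0 = eqState (θ 0))
    (hv : ∀ j, v (j + 1) = A (m (j + 1)) (v j ⊗ₜ[ℂ] eqState (θ (j + 1)))) :
    ∃ c : ℂ, ‖c‖ = 1 ∧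
      v (N - 1) = (c * (((Real.sqrt 2 : ℝ) : ℂ)⁻¹ ^ (N - 1))) •
        eqState (θ 0 + ∑ j ∈ Finset.Ico 1 N, (-1 : ℝ) ^ ((m j : ℕ)) * θ j) ∧
      ∑ a, Complex.normSq (v (N - 1) a) = (2 : ℝ)⁻¹ ^ (N - 1) := by
  obtain ⟨n, rfl⟩ := Nat.exists_eq_add_of_le' hN
  have step (j : ℕ) (a : Fin 2) :
      v (j + 1) a = v j a * eqState (θ (j + 1)) (-a + m (j + 1)) := by
    rw [hv, hA]
    exact IsSumGate.rid_map_id_proj_tmul_apply hCNOT _ _ _ a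
  have v_eq := eqState_cascade hv0 step n
  refine ⟨Complex.exp (Complex.I * (∑ j ∈ Finset.Ico 1 (n + 1), (m j : ℕ) * θ j : ℝ)),
    Complex.norm_exp_I_mul_ofReal _, v_eq, ?_⟩
  rw [Nat.add_sub_cancel, v_eq, sum_normSq_smul_eqState, Complex.normSq_eq_norm_sq, norm_mul,
    Complex.norm_exp_I_mul_ofReal, one_mul, norm_pow, pow_right_comm]
  simp
end
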